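/- arXiv:1311.6021 — 2 statements merged into one kernel-verified Lean document; each statement's English description precedes it below -/
import Mathlib

section
/- Suppose u ∈ RI(ℝ^m) and f : ℝ^m → ℝ is a bounded function such that the set E := {p ∈ ℝ^m : u(p) ≠ f(p)} is a very small subset of ℝ^m. Then f ∈ RI(ℝ^m) and ∫_{ℝ^m} f = ∫_{ℝ^m} u. -/
open Filter Topology

noncomputable section

/-- The dyadic cube in `D_k(ℝ^m)` indexed by `n : Fin m → ℤ`:
the product over `j` of the intervals `[n j * 2⁻ᵏ, (n j + 1) * 2⁻ᵏ)`. -/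
def dyadicCube (m k : ℕ) (n : Fin m → ℤ) : Set (Fin m → ℝ) :=
  {p | ∀ j, (n j : ℝ) * (2 : ℝ) ^ (-(k : ℤ)) ≤ p j ∧ p j < ((n j : ℝ) + 1) * (2 : ℝ) ^ (-(k : ℤ))}

/-- `BB (ℝ^m)`: bounded functions vanishing outside a bounded set. -/
def BB (m : ℕ) (f : (Fin m → ℝ) → ℝ) : Prop :=
  (∃ M : ℝ, ∀ p, |f p| ≤ M) ∧ (∃ R : ℝ, ∀ p, f p ≠ 0 → ∀ j, |p j| ≤ R)

/-- The upper sum `U_k(f) = 2^{-km} ∑_{I ∈ D_k(ℝ^m)} sup_{p ∈ I} f(p)`. -/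
def U (m : ℕ) (f : (Fin m → ℝ) → ℝ) (k : ℕ) : ℝ :=
  (2 : ℝ) ^ (-(k * m : ℤ)) * ∑ᶠ n : Fin m → ℤ, sSup (f '' dyadicCube m k n)

/-- The lower sum `L_k(f) = 2^{-km} ∑_{I ∈ D_k(ℝ^m)} inf_{p ∈ I} f(p)`. -/
def L (m : ℕ) (f : (Fin m → ℝ) → ℝ) (k : ℕ) : ℝ :=
  (2 : ℝ) ^ (-(k * m : ℤ)) * ∑ᶠ n : Fin m → ℤ, sInf (f '' dyadicCube m k n)

/-- `f ∈ RI(ℝ^m)`: `f ∈ BB(ℝ^m)` and the sequences `U_k(f)` and `L_k(f)` have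
a common limit. -/
def RI (m : ℕ) (f : (Fin m → ℝ) → ℝ) : Prop :=
  BB m f ∧ ∃ c : ℝ, Tendsto (U m f) atTop (𝓝 c) ∧ Tendsto (L m f) atTop (𝓝 c)

/-- The Riemann integral `∫_{ℝ^m} f` (the common limit of `U_k(f)` and `L_k(f)`
when `f ∈ RI(ℝ^m)`). -/
def RInt (m : ℕ) (f : (Fin m → ℝ) → ℝ) : ℝ :=
  limUnder atTop (U m f)

/-- The characteristic (indicator) function `χ_E` of a set `E`. -/
def chi {α : Type*} (E : Set α) : α → ℝ := Set.indicator E fun _ => 1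


/-- `E ⊆ ℝ^m` is a very small set: for each `ε > 0` it can be covered by finitely many
dyadic cubes the sum of whose volumes is less than `ε`. -/
def VerySmall (m : ℕ) (E : Set (Fin m → ℝ)) : Prop :=
  ∀ ε > (0 : ℝ), ∃ (N : ℕ) (k : ℕ → ℕ) (c : ℕ → Fin m → ℤ),
    E ⊆ (⋃ i ∈ Finset.range N, dyadicCube m (k i) (c i)) ∧
    ∑ i ∈ Finset.range N, (2 : ℝ) ^ (-(k i * m : ℤ)) < ε

lemma mem_cube_iff (m k : ℕ) (n : Fin m → ℤ) (p : Fin m → ℝ) :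
    p ∈ dyadicCube m k n ↔ ∀ j, (n j : ℝ) ≤ p j * 2 ^ k ∧ p j * 2 ^ k < (n j : ℝ) + 1 := by
  have h2 : (0 : ℝ) < 2 ^ k := by positivity
  simp only [dyadicCube, Set.mem_ofPred_eq, zpow_neg, zpow_natCast]
  refine forall_congr' fun j => and_congr ?_ ?_
  · rw [← div_eq_mul_inv, div_le_iff₀ h2]
  · rw [← div_eq_mul_inv, lt_div_iff₀ h2]

lemma sSup_abs_le {m : ℕ} {f : (Fin m → ℝ) → ℝ} {M : ℝ} (hM : ∀ p, |f p| ≤ M)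
    (s : Set (Fin m → ℝ)) : |sSup (f '' s)| ≤ M := by
  have h0 : 0 ≤ M := (abs_nonneg _).trans (hM 0)
  have hub : ∀ x ∈ f '' s, x ≤ M := by
    rintro _ ⟨p, _, rfl⟩
    exact (abs_le.1 (hM p)).2
  rw [abs_le]
  refine ⟨?_, Real.sSup_le hub h0⟩
  rcases s.eq_empty_or_nonempty with rfl | ⟨p, hp⟩
  · simpa using h0
  · exact (abs_le.1 (hM p)).1.trans (le_csSup ⟨M, hub⟩ ⟨p, hp, rfl⟩)

lemma support_finite {m : ℕ} {f : (Fin m → ℝ) → ℝ} (hf : BB m f) (k : ℕ) :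
    (Function.support fun n : Fin m → ℤ => sSup (f '' dyadicCube m k n)).Finite := by
  obtain ⟨-, R, hR⟩ := hf
  obtain ⟨B, hB⟩ := exists_nat_gt (R * 2 ^ k + 1)
  refine (Set.finite_Icc (fun _ : Fin m => -(B : ℤ)) (fun _ => (B : ℤ))).subset ?_
  intro n hn
  have : ∃ p ∈ dyadicCube m k n, f p ≠ 0 := by
    by_contra! h
    apply hn
    show sSup (f '' dyadicCube m k n) = 0
    apply le_antisymm
    · apply Real.sSup_le _ le_rfl
      rintro _ ⟨p, hp, rfl⟩
      exact (h p hp).le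
    · apply Real.sSup_nonneg
      rintro _ ⟨p, hp, rfl⟩
      exact (h p hp).ge
  obtain ⟨p, hp, hfp⟩ := this
  rw [mem_cube_iff] at hp
  have key : ∀ j, -(B : ℤ) ≤ n j ∧ n j ≤ B := by
    intro j
    have h1 := abs_le.1 (hR p hfp j)
    have h2 : (0 : ℝ) < 2 ^ k := by positivity
    have h3 := mul_le_mul_of_nonneg_right h1.1 h2.le
    have h4 := mul_le_mul_of_nonneg_right h1.2 h2.le
    obtain ⟨h5, h6⟩ := hp j
    constructor
    · have : -(B : ℝ) ≤ n j := by linarith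
      exact_mod_cast this
    · have : (n j : ℝ) ≤ B := by linarith
      exact_mod_cast this
  exact ⟨fun j => (key j).1, fun j => (key j).2⟩

/-- Indices of level-`k` cubes inside the level-`l` cube of index `c`. -/
def subIdx (m k l : ℕ) (c : Fin m → ℤ) : Finset (Fin m → ℤ) :=
  Fintype.piFinset fun j => Finset.Ico (c j * 2 ^ (k - l)) ((c j + 1) * 2 ^ (k - l))

lemma card_subIdx (m k l : ℕ) (c : Fin m → ℤ) : (subIdx m k l c).card = (2 ^ (k - l)) ^ m := by
  have : ∀ j, ((c j + 1) * 2 ^ (k - l) - c j * 2 ^ (k - l)).toNat = 2 ^ (k - l) := by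
    intro j
    have : (c j + 1) * 2 ^ (k - l) - c j * 2 ^ (k - l) = ((2 ^ (k - l) : ℕ) : ℤ) := by
      push_cast; ring
    rw [this, Int.toNat_natCast]
  simp [subIdx, this]

lemma mem_subIdx {m k l : ℕ} (hl : l ≤ k) {c n : Fin m → ℤ} {p : Fin m → ℝ}
    (h1 : p ∈ dyadicCube m k n) (h2 : p ∈ dyadicCube m l c) : n ∈ subIdx m k l c := by
  rw [mem_cube_iff] at h1 h2
  simp only [subIdx, Fintype.mem_piFinset, Finset.mem_Ico]
  intro j
  obtain ⟨a1, a2⟩ := h1 j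
  obtain ⟨b1, b2⟩ := h2 j
  have hd : (0 : ℝ) < 2 ^ (k - l) := by positivity
  have e : p j * 2 ^ k = p j * 2 ^ l * 2 ^ (k - l) := by
    rw [mul_assoc, ← pow_add, Nat.add_sub_cancel' hl]
  have c1 := mul_le_mul_of_nonneg_right b1 hd.le
  have c2 := mul_lt_mul_of_pos_right b2 hd
  rw [← e] at c1 c2
  constructor
  · have : ((c j * 2 ^ (k - l) : ℤ) : ℝ) < ((n j + 1 : ℤ) : ℝ) := by
      push_cast; linarith
    exact Int.lt_add_one_iff.1 (by exact_mod_cast this)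
  · have : (n j : ℝ) < (((c j + 1) * 2 ^ (k - l) : ℤ) : ℝ) := by
      push_cast; linarith
    exact_mod_cast this

lemma U_diff {m : ℕ} {u f : (Fin m → ℝ) → ℝ} (hu : BB m u) (hf : BB m f) {A B : ℝ}
    (hA : ∀ p, |f p| ≤ A) (hB : ∀ p, |u p| ≤ B) {N : ℕ} {l : ℕ → ℕ} {c : ℕ → Fin m → ℤ}
    (hc : {p | u p ≠ f p} ⊆ ⋃ i ∈ Finset.range N, dyadicCube m (l i) (c i)) {k : ℕ}
    (hk : ∀ i ∈ Finset.range N, l i ≤ k) :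
    |U m f k - U m u k| ≤ (A + B) * ∑ i ∈ Finset.range N, (2 : ℝ) ^ (-(l i * m : ℤ)) := by
  classical
  have hAB : 0 ≤ A + B := add_nonneg ((abs_nonneg _).trans (hA 0)) ((abs_nonneg _).trans (hB 0))
  let T : Finset (Fin m → ℤ) := (Finset.range N).biUnion fun i => subIdx m k (l i) (c i)
  have hT : ∀ n, n ∉ T → sSup (f '' dyadicCube m k n) = sSup (u '' dyadicCube m k n) := by
    intro n hn
    congr 1
    refine Set.image_congr fun p hp => ?_
    by_contra hne
    have hpE := hc (show p ∈ {p | u p ≠ f p} from fun h => hne h.symm)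
    simp only [Set.mem_iUnion] at hpE
    obtain ⟨i, hi, hpi⟩ := hpE
    exact hn (Finset.mem_biUnion.2 ⟨i, hi, mem_subIdx (hk i hi) hp hpi⟩)
  have hcard : (T.card : ℝ) ≤ ∑ i ∈ Finset.range N, ((2 : ℝ) ^ (k - l i)) ^ m := by
    have := (Finset.card_biUnion_le :
      T.card ≤ ∑ i ∈ Finset.range N, (subIdx m k (l i) (c i)).card)
    simp only [card_subIdx] at this
    exact_mod_cast this
  have hp : (0 : ℝ) < 2 ^ (-(k * m : ℤ)) := by positivity
  unfold U
  rw [← mul_sub, ← finsum_sub_distrib (support_finite hf k) (support_finite hu k),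
    finsum_eq_sum_of_support_subset (s := T), abs_mul, abs_of_pos hp]
  · calc _ ≤ (2 : ℝ) ^ (-(k * m : ℤ)) * (T.card * (A + B)) := by
          refine mul_le_mul_of_nonneg_left ?_ hp.le
          refine (Finset.abs_sum_le_sum_abs _ _).trans ?_
          rw [← nsmul_eq_mul]
          refine Finset.sum_le_card_nsmul _ _ _ fun n _ => ?_
          exact (abs_sub _ _).trans (add_le_add (sSup_abs_le hA _) (sSup_abs_le hB _))
      _ ≤ (2 : ℝ) ^ (-(k * m : ℤ)) *
            ((∑ i ∈ Finset.range N, ((2 : ℝ) ^ (k - l i)) ^ m) * (A + B)) := by gcongr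
      _ = (A + B) * ∑ i ∈ Finset.range N, (2 : ℝ) ^ (-(k * m : ℤ)) * ((2 : ℝ) ^ (k - l i)) ^ m := by
          rw [← Finset.mul_sum]; ring
      _ = _ := by
          congr 1
          refine Finset.sum_congr rfl fun i hi => ?_
          rw [← pow_mul, ← zpow_natCast, ← zpow_add₀ (two_ne_zero)]
          congr 1
          push_cast [Nat.cast_sub (hk i hi)]
          ring
  · intro n hn
    by_contra h
    exact hn (sub_eq_zero.2 (hT n h))

lemma U_tendsto {m : ℕ} {u f : (Fin m → ℝ) → ℝ} (hu : BB m u) (hf : BB m f)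
    (hs : VerySmall m {p | u p ≠ f p}) {a : ℝ} (h : Tendsto (U m u) atTop (𝓝 a)) :
    Tendsto (U m f) atTop (𝓝 a) := by
  have hd : Tendsto (fun k => U m f k - U m u k) atTop (𝓝 0) := by
    obtain ⟨A, hA⟩ := hf.1
    obtain ⟨B, hB⟩ := hu.1
    have hAB : 0 ≤ A + B := add_nonneg ((abs_nonneg _).trans (hA 0)) ((abs_nonneg _).trans (hB 0))
    rw [Metric.tendsto_atTop]
    intro ε hε
    obtain ⟨N, l, c, hc, hsum⟩ := hs (ε / (A + B + 1)) (by positivity)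
    refine ⟨(Finset.range N).sup l, fun k hk => ?_⟩
    rw [Real.dist_eq, sub_zero]
    refine (U_diff hu hf hA hB hc fun i hi => (Finset.le_sup hi).trans hk).trans_lt ?_
    rw [lt_div_iff₀ (by positivity)] at hsum
    have : 0 ≤ ∑ i ∈ Finset.range N, (2 : ℝ) ^ (-(l i * m : ℤ)) :=
      Finset.sum_nonneg fun i _ => by positivity
    nlinarith
  simpa using hd.add h

lemma BB_neg {m : ℕ} {f : (Fin m → ℝ) → ℝ} (hf : BB m f) : BB m (fun p => -f p) := by
  simpa [BB] using hf

lemma L_eq (m : ℕ) (f : (Fin m → ℝ) → ℝ) : L m f = fun k => -U m (fun p => -f p) k := by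
  funext k
  unfold L U
  rw [← mul_neg ((2 : ℝ) ^ (-(k * m : ℤ))) (finsum _), ← finsum_neg_distrib]
  congr 2
  funext n
  rw [Real.sInf_def]
  congr 2
  ext x
  simp only [Set.mem_neg, Set.mem_image]
  refine exists_congr fun p => and_congr_right fun _ => ?_
  constructor <;> intro h <;> linarith

lemma BB_of_verySmall {m : ℕ} {u f : (Fin m → ℝ) → ℝ} (hu : BB m u)
    (hfb : ∃ M : ℝ, ∀ p, |f p| ≤ M) (hs : VerySmall m {p | u p ≠ f p}) : BB m f := by
  refine ⟨hfb, ?_⟩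
  obtain ⟨R, hR⟩ := hu.2
  obtain ⟨N, l, c, hc, -⟩ := hs 1 one_pos
  have hS : ∀ i, 0 ≤ ∑ j, (|(c i j : ℝ)| + 1) := fun i =>
    Finset.sum_nonneg fun j _ => by positivity
  refine ⟨|R| + ∑ i ∈ Finset.range N, ∑ j, (|(c i j : ℝ)| + 1), fun p hp j => ?_⟩
  by_cases h : u p = f p
  · have h1 := hR p (h ▸ hp) j
    have h2 := Finset.sum_nonneg fun i (_ : i ∈ Finset.range N) => hS i
    linarith [le_abs_self R]
  · have hpE := hc h
    simp only [Set.mem_iUnion] at hpE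
    obtain ⟨i, hi, hpi⟩ := hpE
    have h1 := Finset.single_le_sum (fun i _ => hS i) hi
    have h2 := Finset.single_le_sum (f := fun j => |(c i j : ℝ)| + 1)
      (fun j _ => by positivity) (Finset.mem_univ j)
    obtain ⟨a, b⟩ := (mem_cube_iff _ _ _ _).1 hpi j
    have h3 : |p j * 2 ^ l i| ≤ |(c i j : ℝ)| + 1 := by
      rw [abs_le]
      constructor <;> linarith [neg_abs_le (c i j : ℝ), le_abs_self (c i j : ℝ)]
    have h4 : |p j| ≤ |p j * 2 ^ l i| := by
      rw [abs_mul, abs_of_pos (by positivity : (0 : ℝ) < 2 ^ l i)]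
      exact le_mul_of_one_le_right (abs_nonneg _) (one_le_pow₀ one_le_two)
    linarith [abs_nonneg R]

theorem stmt_16 (m : ℕ) (hm : 0 < m) (u f : (Fin m → ℝ) → ℝ) (hu : RI m u)
    (hfb : ∃ M : ℝ, ∀ p, |f p| ≤ M)
    (hsmall : VerySmall m {p | u p ≠ f p}) :
    RI m f ∧ RInt m f = RInt m u := by
  have hf := BB_of_verySmall hu.1 hfb hsmall
  obtain ⟨hub, a, hU, hL⟩ := hu
  have hUf := U_tendsto hub hf hsmall hU
  refine ⟨⟨hf, a, hUf, ?_⟩, hUf.limUnder_eq.trans hU.limUnder_eq.symm⟩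
  rw [L_eq] at hL ⊢
  have hL' : Tendsto (U m fun p => -u p) atTop (𝓝 (-a)) := by simpa using hL.neg
  have := U_tendsto (BB_neg hub) (BB_neg hf) (by simpa using hsmall) hL'
  simpa using this.neg

end
end

section
/- Suppose f : ℝ² → ℝ is in both RI(ℝ²) and RpI(ℝ²). Then ∫_{ℝ²} f = ∫_ℝ g_f, where g_f(x) = ∫_ℝ f(x, ·) for each x ∈ ℝ. In classical notation: the double Riemann integral of f equals the repeated integral ∫_ℝ (∫_ℝ f(x, y) dy) dx. -/
open Filter Topology

noncomputable section

/-- The dyadic interval `[n * 2⁻ᵏ, (n+1) * 2⁻ᵏ)` of `D_k(ℝ)`. -/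
def dyadicIvl (k : ℕ) (n : ℤ) : Set ℝ :=
  Set.Ico ((n : ℝ) * (2 : ℝ) ^ (-(k : ℤ))) (((n : ℝ) + 1) * (2 : ℝ) ^ (-(k : ℤ)))

/-- `BB(ℝ)`: bounded functions `ℝ → ℝ` vanishing outside a bounded set. -/
def BB1 (f : ℝ → ℝ) : Prop :=
  (∃ M : ℝ, ∀ x, |f x| ≤ M) ∧ (∃ R : ℝ, ∀ x, f x ≠ 0 → |x| ≤ R)

/-- The upper sum `U_k(f) = 2⁻ᵏ ∑_{I ∈ D_k(ℝ)} sup_{p ∈ I} f(p)`. -/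
def U1 (f : ℝ → ℝ) (k : ℕ) : ℝ :=
  (2 : ℝ) ^ (-(k : ℤ)) * ∑ᶠ n : ℤ, sSup (f '' dyadicIvl k n)

/-- The lower sum `L_k(f) = 2⁻ᵏ ∑_{I ∈ D_k(ℝ)} inf_{p ∈ I} f(p)`. -/
def L1 (f : ℝ → ℝ) (k : ℕ) : ℝ :=
  (2 : ℝ) ^ (-(k : ℤ)) * ∑ᶠ n : ℤ, sInf (f '' dyadicIvl k n)

/-- `f ∈ RI(ℝ)`: `f ∈ BB(ℝ)` and `U_k(f)` and `L_k(f)` have a common limit. -/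
def RI1 (f : ℝ → ℝ) : Prop :=
  BB1 f ∧ ∃ c : ℝ, Tendsto (U1 f) atTop (𝓝 c) ∧ Tendsto (L1 f) atTop (𝓝 c)

/-- The Riemann integral `∫_ℝ f`. -/
def RInt1 (f : ℝ → ℝ) : ℝ :=
  limUnder atTop (U1 f)

/-- The dyadic square of `D_k(ℝ²)` indexed by `(n₁, n₂) : ℤ × ℤ`. -/
def dyadicSq (k : ℕ) (n : ℤ × ℤ) : Set (ℝ × ℝ) :=
  dyadicIvl k n.1 ×ˢ dyadicIvl k n.2

/-- `BB(ℝ²)`: bounded functions `ℝ² → ℝ` vanishing outside a bounded set. -/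
def BB2 (f : ℝ × ℝ → ℝ) : Prop :=
  (∃ M : ℝ, ∀ p, |f p| ≤ M) ∧ (∃ R : ℝ, ∀ p : ℝ × ℝ, f p ≠ 0 → |p.1| ≤ R ∧ |p.2| ≤ R)

/-- The upper sum `U_k(f) = 2^{-2k} ∑_{I ∈ D_k(ℝ²)} sup_{p ∈ I} f(p)`. -/
def U2 (f : ℝ × ℝ → ℝ) (k : ℕ) : ℝ :=
  (2 : ℝ) ^ (-(2 * k : ℤ)) * ∑ᶠ n : ℤ × ℤ, sSup (f '' dyadicSq k n)

/-- The lower sum `L_k(f) = 2^{-2k} ∑_{I ∈ D_k(ℝ²)} inf_{p ∈ I} f(p)`. -/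
def L2 (f : ℝ × ℝ → ℝ) (k : ℕ) : ℝ :=
  (2 : ℝ) ^ (-(2 * k : ℤ)) * ∑ᶠ n : ℤ × ℤ, sInf (f '' dyadicSq k n)

/-- `f ∈ RI(ℝ²)`: `f ∈ BB(ℝ²)` and `U_k(f)` and `L_k(f)` have a common limit. -/
def RI2 (f : ℝ × ℝ → ℝ) : Prop :=
  BB2 f ∧ ∃ c : ℝ, Tendsto (U2 f) atTop (𝓝 c) ∧ Tendsto (L2 f) atTop (𝓝 c)

/-- The double Riemann integral `∫_{ℝ²} f`. -/
def RInt2 (f : ℝ × ℝ → ℝ) : ℝ :=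
  limUnder atTop (U2 f)

/-- `f ∈ RpI(ℝ²)`: `f ∈ BB(ℝ²)`, for each `x` the function `y ↦ f (x, y)` is in `RI(ℝ)`,
and the function `g_f : x ↦ ∫_ℝ f (x, ·)` is in `RI(ℝ)`. -/
def RpI2 (f : ℝ × ℝ → ℝ) : Prop :=
  BB2 f ∧ (∀ x : ℝ, RI1 fun y => f (x, y)) ∧ RI1 fun x => RInt1 fun y => f (x, y)

lemma fs_le {α : Type*} {f g : α → ℝ} (hf : (Function.support f).Finite)
    (hg : (Function.support g).Finite) (h : ∀ a, f a ≤ g a) : ∑ᶠ a, f a ≤ ∑ᶠ a, g a := by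
  classical
  rw [finsum_eq_sum_of_support_subset f (s := hf.toFinset ∪ hg.toFinset) (by simp),
    finsum_eq_sum_of_support_subset g (s := hf.toFinset ∪ hg.toFinset) (by simp)]
  exact Finset.sum_le_sum fun a _ => h a

lemma fs_split {f : ℤ → ℝ} (hf : (Function.support f).Finite) :
    ∑ᶠ n, f n = ∑ᶠ n, f (2 * n) + ∑ᶠ n, f (2 * n + 1) := by
  have i2 : Function.Injective (fun n : ℤ => 2 * n) := fun a b h => by simpa using h
  have i3 : Function.Injective (fun n : ℤ => 2 * n + 1) := fun a b h => by simpa using h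
  rw [← finsum_mem_range (f := f) i2, ← finsum_mem_range (f := f) i3,
    ← finsum_mem_union' _ (hf.inter_of_right _) (hf.inter_of_right _), ← finsum_mem_univ f]
  · congr 1
    ext n
    have : n ∈ Set.range (fun n : ℤ => 2 * n) ∪ Set.range (fun n : ℤ => 2 * n + 1) := by
      rcases Int.even_or_odd' n with ⟨m, h | h⟩
      · exact Or.inl ⟨m, h.symm⟩
      · exact Or.inr ⟨m, h.symm⟩
    simp only [this, Set.mem_univ]
  · rw [Set.disjoint_left]
    rintro _ ⟨a, rfl⟩ ⟨b, hb⟩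
    simp only at hb
    omega

lemma dy_pos (k : ℕ) : (0 : ℝ) < (2 : ℝ) ^ (-(k : ℤ)) := by positivity

lemma dy_ne (k : ℕ) (n : ℤ) : (dyadicIvl k n).Nonempty := by
  refine ⟨(n : ℝ) * (2 : ℝ) ^ (-(k : ℤ)), le_rfl, ?_⟩
  have := dy_pos k
  nlinarith

lemma dy_far (k : ℕ) (R : ℝ) : ∃ N : ℤ, ∀ n : ℤ, n ∉ Set.Icc (-N) N →
    ∀ x ∈ dyadicIvl k n, R < |x| := by
  have hd := dy_pos k
  set d := (2 : ℝ) ^ (-(k : ℤ)) with hdd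
  obtain ⟨N, hN⟩ := exists_int_gt (|R| / d + 1)
  have hR : |R| < (N - 1) * d := by
    rw [← div_lt_iff₀ hd]; linarith
  refine ⟨N, fun n hn x hx => ?_⟩
  have hx1 : (n : ℝ) * d ≤ x := hx.1
  have hx2 : x < ((n : ℝ) + 1) * d := hx.2
  have hR' := le_abs_self R
  rw [Set.mem_Icc, not_and_or, not_le, not_le] at hn
  rcases hn with h | h
  · have h' : (n : ℝ) + 1 ≤ -N := by exact_mod_cast h
    have := neg_le_abs x
    nlinarith
  · have h' : (N : ℝ) + 1 ≤ n := by exact_mod_cast h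
    have := le_abs_self x
    nlinarith

lemma sSup_image_zero {α : Type*} (f : α → ℝ) (s : Set α) (h : ∀ x ∈ s, f x = 0) :
    sSup (f '' s) = 0 := by
  apply le_antisymm
  · apply Real.sSup_nonpos
    rintro _ ⟨x, hx, rfl⟩
    exact (h x hx).le
  · apply Real.sSup_nonneg
    rintro _ ⟨x, hx, rfl⟩
    exact (h x hx).ge

lemma supp1 {f : ℝ → ℝ} (hf : BB1 f) (k : ℕ) :
    (Function.support fun n : ℤ => sSup (f '' dyadicIvl k n)).Finite := by
  obtain ⟨R, hR⟩ := hf.2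
  obtain ⟨N, hN⟩ := dy_far k R
  refine (Set.finite_Icc (-N) N).subset fun n hn => ?_
  by_contra hc
  refine hn (sSup_image_zero _ _ fun x hx => ?_)
  by_contra h0
  exact absurd (hR x h0) (not_le.2 (hN n hc x hx))

lemma supp2 {f : ℝ × ℝ → ℝ} (hf : BB2 f) (k : ℕ) :
    (Function.support fun n : ℤ × ℤ => sSup (f '' dyadicSq k n)).Finite := by
  obtain ⟨R, hR⟩ := hf.2
  obtain ⟨N, hN⟩ := dy_far k R
  refine ((Set.finite_Icc (-N) N).prod (Set.finite_Icc (-N) N)).subset fun n hn => ?_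
  by_contra hc
  refine hn (sSup_image_zero _ _ fun x hx => ?_)
  by_contra h0
  rw [Set.mem_prod, not_and_or] at hc
  rcases hc with hc | hc
  · exact absurd (hR x h0).1 (not_le.2 (hN _ hc _ hx.1))
  · exact absurd (hR x h0).2 (not_le.2 (hN _ hc _ hx.2))

lemma bdd_im {α : Type*} {f : α → ℝ} (hf : ∃ M : ℝ, ∀ x, |f x| ≤ M) (s : Set α) :
    BddAbove (f '' s) := by
  obtain ⟨M, hM⟩ := hf
  refine ⟨M, ?_⟩
  rintro _ ⟨x, _, rfl⟩
  exact (le_abs_self _).trans (hM x)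

lemma dy_sub (k : ℕ) (n m : ℤ) (h : m = 2 * n ∨ m = 2 * n + 1) :
    dyadicIvl (k + 1) m ⊆ dyadicIvl k n := by
  have hd := dy_pos (k + 1)
  have he : (2 : ℝ) ^ (-(k : ℤ)) = 2 * (2 : ℝ) ^ (-((k + 1 : ℕ) : ℤ)) := by
    rw [← zpow_one_add₀ (by norm_num)]; congr 1; push_cast; ring
  rintro x ⟨h1, h2⟩
  unfold dyadicIvl
  rw [he]
  rcases h with rfl | rfl <;> push_cast at h1 h2 hd ⊢ <;> constructor <;> nlinarith

lemma U1_succ {f : ℝ → ℝ} (hf : BB1 f) (k : ℕ) : U1 f (k + 1) ≤ U1 f k := by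
  have he : (2 : ℝ) ^ (-(k : ℤ)) = (2 : ℝ) ^ (-((k + 1 : ℕ) : ℤ)) * 2 := by
    rw [← zpow_add_one₀ (by norm_num)]; congr 1; push_cast; ring
  unfold U1
  rw [he, mul_assoc]
  refine mul_le_mul_of_nonneg_left ?_ (dy_pos (k + 1)).le
  have f1 := supp1 hf (k + 1)
  have f0 := supp1 hf k
  have i2 : Function.Injective (fun n : ℤ => 2 * n) := fun a b h => by simpa using h
  have i3 : Function.Injective (fun n : ℤ => 2 * n + 1) := fun a b h => by simpa using h
  have g2 : (Function.support fun n : ℤ => sSup (f '' dyadicIvl (k + 1) (2 * n))).Finite :=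
    f1.preimage i2.injOn
  have g3 : (Function.support fun n : ℤ => sSup (f '' dyadicIvl (k + 1) (2 * n + 1))).Finite :=
    f1.preimage i3.injOn
  rw [fs_split f1, two_mul]
  refine add_le_add (fs_le g2 f0 fun n => ?_) (fs_le g3 f0 fun n => ?_)
  · exact csSup_le_csSup (bdd_im hf.1 _) ((dy_ne _ _).image f)
      (Set.image_mono (dy_sub k n _ (Or.inl rfl)))
  · exact csSup_le_csSup (bdd_im hf.1 _) ((dy_ne _ _).image f)
      (Set.image_mono (dy_sub k n _ (Or.inr rfl)))

lemma RInt1_le {f : ℝ → ℝ} (hf : RI1 f) (k : ℕ) : RInt1 f ≤ U1 f k := by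
  obtain ⟨hb, c, hc, -⟩ := hf
  rw [show RInt1 f = c from hc.limUnder_eq]
  exact (antitone_nat_of_succ_le (U1_succ hb)).le_of_tendsto hc k

lemma U1_le_U2 {f : ℝ × ℝ → ℝ} (h2 : RpI2 f) (k : ℕ) :
    U1 (fun x => RInt1 fun y => f (x, y)) k ≤ U2 f k := by
  obtain ⟨hb, hr, hg⟩ := h2
  have he : (2 : ℝ) ^ (-(2 * k : ℤ)) = (2 : ℝ) ^ (-(k : ℤ)) * (2 : ℝ) ^ (-(k : ℤ)) := by
    rw [← zpow_add₀ (by norm_num)]; congr 1; ring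
  have hS := supp2 hb k
  unfold U2
  rw [he, finsum_curry _ hS, mul_assoc]
  unfold U1
  refine mul_le_mul_of_nonneg_left ?_ (dy_pos k).le
  have hT : (Function.support fun n : ℤ => ∑ᶠ m : ℤ, sSup (f '' dyadicSq k (n, m))).Finite := by
    refine (hS.image Prod.fst).subset fun n hn => ?_
    by_contra hc
    refine hn ?_
    have : ∀ m : ℤ, sSup (f '' dyadicSq k (n, m)) = 0 := fun m => by
      by_contra h0
      exact hc ⟨(n, m), h0, rfl⟩
    simp [this]
  rw [mul_finsum]
  refine fs_le (supp1 hg.1 k) (hT.subset ?_) fun n => ?_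
  · intro n hn h0
    exact hn (by simp only [h0, mul_zero])
  refine csSup_le ((dy_ne k n).image _) ?_
  rintro _ ⟨x, hx, rfl⟩
  refine (RInt1_le (hr x) k).trans ?_
  unfold U1
  refine mul_le_mul_of_nonneg_left ?_ (dy_pos k).le
  refine fs_le (supp1 (hr x).1 k) (hS.preimage (f := fun m : ℤ => (n, m))
    (fun a _ b _ h => by simpa using h)) fun m => ?_
  refine csSup_le_csSup (bdd_im hb.1 _) ((dy_ne k m).image _) ?_
  rintro _ ⟨y, hy, rfl⟩
  exact ⟨(x, y), ⟨hx, hy⟩, rfl⟩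

lemma RInt1_le_RInt2 {f : ℝ × ℝ → ℝ} (h1 : RI2 f) (h2 : RpI2 f) :
    (RInt1 fun x => RInt1 fun y => f (x, y)) ≤ RInt2 f := by
  obtain ⟨-, c, hc, -⟩ := h1
  rw [show RInt2 f = c from hc.limUnder_eq]
  exact ge_of_tendsto' hc fun k => (RInt1_le h2.2.2 k).trans (U1_le_U2 h2 k)

lemma sSup_neg_im {α : Type*} (f : α → ℝ) (s : Set α) :
    sSup ((fun x => -f x) '' s) = -sInf (f '' s) := by
  rw [Real.sInf_def, neg_neg]
  congr 1
  rw [← Set.image_neg_eq_neg, Set.image_image]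

lemma sInf_neg_im {α : Type*} (f : α → ℝ) (s : Set α) :
    sInf ((fun x => -f x) '' s) = -sSup (f '' s) := by
  have := sSup_neg_im (fun x => -f x) s
  simp only [neg_neg] at this
  rw [this, neg_neg]

lemma U1_neg (f : ℝ → ℝ) : U1 (fun x => -f x) = fun k => -L1 f k := by
  funext k
  simp only [U1, L1, sSup_neg_im, finsum_neg_distrib, mul_neg]

lemma L1_neg (f : ℝ → ℝ) : L1 (fun x => -f x) = fun k => -U1 f k := by
  funext k
  simp only [U1, L1, sInf_neg_im, finsum_neg_distrib, mul_neg]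

lemma U2_neg (f : ℝ × ℝ → ℝ) : U2 (fun x => -f x) = fun k => -L2 f k := by
  funext k
  simp only [U2, L2, sSup_neg_im, finsum_neg_distrib, mul_neg]

lemma L2_neg (f : ℝ × ℝ → ℝ) : L2 (fun x => -f x) = fun k => -U2 f k := by
  funext k
  simp only [U2, L2, sInf_neg_im, finsum_neg_distrib, mul_neg]

lemma BB2_neg {f : ℝ × ℝ → ℝ} (h : BB2 f) : BB2 fun x => -f x := by
  simpa [BB2] using h

lemma RI1_neg {f : ℝ → ℝ} (h : RI1 f) :
    (RI1 fun x => -f x) ∧ RInt1 (fun x => -f x) = -RInt1 f := by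
  obtain ⟨hb, c, hu, hl⟩ := h
  have hu' : Tendsto (U1 fun x => -f x) atTop (𝓝 (-c)) := by rw [U1_neg]; exact hl.neg
  have hl' : Tendsto (L1 fun x => -f x) atTop (𝓝 (-c)) := by rw [L1_neg]; exact hu.neg
  refine ⟨⟨by simpa [BB1] using hb, -c, hu', hl'⟩, ?_⟩
  rw [show RInt1 f = c from hu.limUnder_eq]
  exact hu'.limUnder_eq

lemma RI2_neg {f : ℝ × ℝ → ℝ} (h : RI2 f) :
    (RI2 fun x => -f x) ∧ RInt2 (fun x => -f x) = -RInt2 f := by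
  obtain ⟨hb, c, hu, hl⟩ := h
  have hu' : Tendsto (U2 fun x => -f x) atTop (𝓝 (-c)) := by rw [U2_neg]; exact hl.neg
  have hl' : Tendsto (L2 fun x => -f x) atTop (𝓝 (-c)) := by rw [L2_neg]; exact hu.neg
  refine ⟨⟨BB2_neg hb, -c, hu', hl'⟩, ?_⟩
  rw [show RInt2 f = c from hu.limUnder_eq]
  exact hu'.limUnder_eq

theorem stmt_19 (f : ℝ × ℝ → ℝ) (h1 : RI2 f) (h2 : RpI2 f) :
    RInt2 f = RInt1 fun x => RInt1 fun y => f (x, y) := by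
  have hg : (fun x => RInt1 fun y => -f (x, y)) = fun x => -RInt1 fun y => f (x, y) :=
    funext fun x => (RI1_neg (h2.2.1 x)).2
  have h2' : RpI2 fun p => -f p := by
    refine ⟨BB2_neg h2.1, fun x => (RI1_neg (h2.2.1 x)).1, ?_⟩
    rw [hg]
    exact (RI1_neg h2.2.2).1
  have A := RInt1_le_RInt2 h1 h2
  have B := RInt1_le_RInt2 (RI2_neg h1).1 h2'
  rw [hg, (RI1_neg h2.2.2).2, (RI2_neg h1).2] at B
  linarith

end
end
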